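/- arXiv:0912.4904 — 2 statements merged into one kernel-verified Lean document; each statement's English description precedes it below -/
import Mathlib

section
/- Refinement of Nesterenko's criterion: Let τ₁, τ₂ > 0 and σ(n) a non-decreasing positive function with σ(n) → ∞. Let θ₁,…,θ_m be real numbers. Assume that for all sufficiently large n there is an integer linear form L_n(X) = Σ_{i=0}^m ℓ_{in} X_i with Σ_i |ℓ_{in}| ≤ e^{σ(n)} and e^{−(τ₁+o(1))σ(n)} ≤ |L_n(1,θ₁,…,θ_m)| ≤ e^{−(τ₂+o(1))σ(n+1)}. Then the dimension over ℚ of the vector space ℚ + ℚθ₁ + ⋯ + ℚθ_m is at least (1+τ₁)/(1+τ₁−τ₂). -/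
open Filter

/-!
Choose a `ℤ`-basis `v₀, …, v_k` of the group generated by the numbers `ηᵢ` and apply Dirichlet's
theorem to the quotients `vⱼ / v₀`: for every `M` some real `t` with `1 ≪ |t| ≪ M ^ k` has all the
`t ηᵢ` within `O(1 / M)` of integers. If moreover `|t L_n(η)| < 1 / 2`, then the integer near
`t L_n(η)` is `0`, so `|t L_n(η)| ≪ e^{σ(n)} / M`. At an `n` where `|t L_n(η)|` has just dropped
below `1 / 2`, the lower bound for `L_n(η)` turns this into `|t| ≪ e^{(1 + τ₁) σ(n)} / M`, while the
upper bound for `L_{n-1}(η)` gives `|t| ≫ e^{τ₂ σ(n)}`. Eliminating `M` and `t` leaves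
`e^{(k + 1) τ₂ σ(n)} ≪ e^{k (1 + τ₁) σ(n)}` for arbitrarily large `n`.
-/

section DiophantineApproximation

variable {ι : Type*} [Fintype ι]

theorem exists_nat_forall_abs_mul_sub_round_le (α : ι → ℝ) {M : ℕ} (hM : 0 < M) :
    ∃ q : ℕ, 1 ≤ q ∧ q ≤ M ^ Fintype.card ι ∧ ∀ i, |q * α i - round (q * α i)| ≤ 1 / M := by
  have hM' : (1 : ℝ) ≤ M := by exact_mod_cast hM
  have hM₀ : (0 : ℝ) < 1 / M := by positivity
  have ball_volume : MeasureTheory.volume (Metric.closedBall (0 : ι → UnitAddCircle) (1 / M / 2))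
      = ENNReal.ofReal ((1 / M) ^ Fintype.card ι) := by
    rw [closedBall_pi _ (by positivity), MeasureTheory.volume_pi_pi]
    simp only [AddCircle.volume_closedBall, Pi.zero_apply, mul_div_cancel₀ _ (two_ne_zero' ℝ),
      min_eq_right ((div_le_one₀ (by positivity)).2 hM'), Finset.prod_const, Finset.card_univ,
      ENNReal.ofReal_pow hM₀.le]
  obtain ⟨q, ⟨hq₁, hqM⟩, hq⟩ := NormedAddCommGroup.exists_norm_nsmul_le
    (μ := MeasureTheory.volume) (fun i ↦ (α i : UnitAddCircle)) (pow_pos hM (Fintype.card ι))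
    (1 / M) (by
      rw [ball_volume, ← ENNReal.ofReal_nsmul, ← Set.pi_univ Set.univ, MeasureTheory.volume_pi_pi]
      simp only [UnitAddCircle.measure_univ, Finset.prod_const_one, ENNReal.one_le_ofReal]
      rw [nsmul_eq_mul, one_div_pow]
      push_cast
      rw [add_mul, mul_one_div_cancel (by positivity)]
      exact le_add_of_nonneg_right (by positivity))
  refine ⟨q, hq₁, hqM, fun i ↦ ?_⟩
  have := (norm_le_pi_norm _ i).trans hq
  simpa only [Pi.smul_apply, ← AddCircle.coe_nsmul, UnitAddCircle.norm_eq, nsmul_eq_mul] using this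

theorem exists_linearIndependent_eq_sum_zsmul {ι V : Type*} [Finite ι] [AddCommGroup V] [Module ℚ V]
    (η : ι → V) {d : ℕ} (hd : Module.finrank ℚ (Submodule.span ℚ (Set.range η)) = d) :
    ∃ v : Fin d → V, LinearIndependent ℚ v ∧ ∃ z : ι → Fin d → ℤ, ∀ i, η i = ∑ j, z i j • v j := by
  have : IsAddTorsionFree V := .of_isTorsionFree ℚ V
  have : Module.Finite ℤ (Submodule.span ℤ (Set.range η)) := .span_of_finite ℤ (Set.finite_range η)
  rw [Submodule.finrank_span_eq_finrank_span ℤ ℚ] at hd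
  let b := Module.finBasisOfFinrankEq ℤ (Submodule.span ℤ (Set.range η)) hd
  let x (i : ι) : Submodule.span ℤ (Set.range η) := ⟨η i, Submodule.subset_span ⟨i, rfl⟩⟩
  refine ⟨fun j ↦ b j, ?_, fun i ↦ b.repr (x i), fun i ↦ ?_⟩
  · have independent_int : LinearIndependent ℤ fun j ↦ (b j : V) :=
      b.linearIndependent.map' (Submodule.span ℤ (Set.range η)).subtype (Submodule.ker_subtype _)
    exact (LinearIndependent.iff_fractionRing ℤ ℚ).1 independent_int
  · simpa only [Submodule.coe_sum, Submodule.coe_smul] using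
      congrArg Subtype.val (b.sum_repr (x i)).symm

theorem abs_mul_sum_sub_intCast_sum_le {R : Type*} [CommRing R] [LinearOrder R]
    [IsStrictOrderedRing R] {x : ι → R} {Y : ι → ℤ} {t B : R} (h : ∀ i, |t * x i - Y i| ≤ B)
    (l : ι → ℤ) :
    |t * ∑ i, l i * x i - (∑ i, l i * Y i : ℤ)| ≤ (∑ i, |l i| : ℤ) * B := by
  calc |t * ∑ i, l i * x i - (∑ i, l i * Y i : ℤ)|
      = |∑ i, l i * (t * x i - Y i)| := by
        push_cast
        rw [Finset.mul_sum, ← Finset.sum_sub_distrib]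
        congr! 2
        ring
    _ ≤ ∑ i, |l i * (t * x i - Y i)| := Finset.abs_sum_le_sum_abs _ _
    _ ≤ ∑ i, |(l i : R)| * B := by
        gcongr with i
        rw [abs_mul]
        exact mul_le_mul_of_nonneg_left (h i) (abs_nonneg _)
    _ = (∑ i, |l i| : ℤ) * B := by
        push_cast
        rw [Finset.sum_mul]

theorem exists_simultaneous_approx_of_finrank_span {ι : Type*} [Finite ι] {η : ι → ℝ} {k : ℕ}
    (hk : Module.finrank ℚ (Submodule.span ℚ (Set.range η)) = k + 1) :
    ∃ c > (0 : ℝ), ∃ A ≥ (0 : ℝ), ∀ M : ℕ, 0 < M → ∃ (t : ℝ) (Y : ι → ℤ),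
      c ≤ |t| ∧ |t| ≤ c * M ^ k ∧ ∀ i, |t * η i - Y i| ≤ A / M := by
  obtain ⟨v, hv, z, hz⟩ := exists_linearIndependent_eq_sum_zsmul η hk
  have := Fintype.ofFinite ι
  have hv₀ : v 0 ≠ 0 := hv.ne_zero 0
  refine ⟨|(v 0)⁻¹|, by positivity, ∑ i, (∑ j, |z i j| : ℤ), by positivity, fun M hM ↦ ?_⟩
  obtain ⟨q, hq₁, hqM, hq⟩ :=
    exists_nat_forall_abs_mul_sub_round_le (fun j : Fin k ↦ v j.succ / v 0) hM
  rw [Fintype.card_fin] at hqM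
  let P : Fin (k + 1) → ℤ := Fin.cons q fun j ↦ round (q * (v j.succ / v 0))
  have approx_basis (j) : |(v 0)⁻¹ * q * v j - P j| ≤ 1 / M := by
    cases j using Fin.cases with
    | zero => simp [P, mul_right_comm _ _ (v 0), hv₀]
    | succ j =>
      have mul_comm_div : (v 0)⁻¹ * q * v j.succ = q * (v j.succ / v 0) := by ring
      simpa only [P, Fin.cons_succ, mul_comm_div] using hq j
  refine ⟨(v 0)⁻¹ * q, fun i ↦ ∑ j, z i j * P j, ?_, ?_, fun i ↦ ?_⟩
  · rw [abs_mul, Nat.abs_cast]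
    exact le_mul_of_one_le_right (abs_nonneg _) (by exact_mod_cast hq₁)
  · rw [abs_mul, Nat.abs_cast]
    gcongr
    exact_mod_cast hqM
  · simp only [hz i, zsmul_eq_mul]
    refine (abs_mul_sum_sub_intCast_sum_le approx_basis (z i)).trans ?_
    rw [mul_one_div]
    gcongr
    exact Finset.single_le_sum (f := fun i ↦ ((∑ j, |z i j| : ℤ) : ℝ))
      (fun i _ ↦ by positivity) (Finset.mem_univ i)

theorem abs_le_abs_sub_intCast {R : Type*} [Field R] [LinearOrder R] [IsStrictOrderedRing R]
    [FloorRing R] {x : R} (hx : |x| < 1 / 2) (n : ℤ) : |x| ≤ |x - n| := by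
  have round_eq_zero : round x = 0 :=
    round_eq_zero_iff.2 ⟨(abs_lt.1 hx).1.le, (abs_lt.1 hx).2⟩
  simpa only [round_eq_zero, Int.cast_zero, sub_zero] using round_le x n

theorem abs_mul_sum_le_of_lt_half {x : ι → ℝ} {Y : ι → ℤ} {t B S : ℝ} (hB : 0 ≤ B)
    (h : ∀ i, |t * x i - Y i| ≤ B) {l : ι → ℤ} (hl : (∑ i, |l i| : ℤ) ≤ S)
    (hlt : |t * ∑ i, l i * x i| < 1 / 2) : |t * ∑ i, l i * x i| ≤ S * B :=
  (abs_le_abs_sub_intCast hlt _).trans <|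
    (abs_mul_sum_sub_intCast_sum_le h l).trans <| mul_le_mul_of_nonneg_right hl hB

end DiophantineApproximation

section Growth

theorem exists_ge_le_and_succ_lt {β : Type*} [LinearOrder β] {u : ℕ → β} {r : β} {N : ℕ}
    (hN : r ≤ u N) (hlt : ∃ n ≥ N, u n < r) : ∃ n ≥ N, r ≤ u n ∧ u (n + 1) < r := by
  by_contra! hstep
  obtain ⟨n, hn, hun⟩ := hlt
  exact hun.not_ge <| Nat.le_induction hN hstep n hn

theorem le_of_frequently_exp_mul_le {β : Type*} {l : Filter β} {σ : β → ℝ}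
    (hσ : Tendsto σ l atTop) {a b K : ℝ}
    (h : ∃ᶠ x in l, Real.exp (a * σ x) ≤ K * Real.exp (b * σ x)) : a ≤ b := by
  by_contra! hba
  have hlarge : ∀ᶠ x in l, K < Real.exp ((a - b) * σ x) :=
    (Real.tendsto_exp_atTop.comp (hσ.const_mul_atTop (sub_pos.2 hba))).eventually_gt_atTop K
  obtain ⟨x, hle, hlt⟩ := (h.and_eventually hlarge).exists
  rw [sub_mul, Real.exp_sub, lt_div_iff₀ (Real.exp_pos _)] at hlt
  exact hlt.not_ge hle

theorem exp_mul_le_of_mul_bounds {τ₁ τ₂ s c A M T x y : ℝ} {k : ℕ} (hM : 0 < M) (hT : 0 ≤ T)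
    (hTM : T ≤ c * M ^ k) (hx : x ≤ Real.exp (-τ₂ * s)) (hTx : 1 / 2 ≤ T * x)
    (hy : Real.exp (-τ₁ * s) ≤ y) (hTy : T * y ≤ Real.exp s * (A / M)) :
    Real.exp ((k + 1) * τ₂ * s) ≤
      2 ^ (k + 1) * c * A ^ k * Real.exp (k * (1 + τ₁) * s) := by
  have hTlow : Real.exp (τ₂ * s) ≤ 2 * T := by
    have := hTx.trans (mul_le_mul_of_nonneg_left hx hT)
    rw [neg_mul, Real.exp_neg, ← div_eq_mul_inv, le_div_iff₀ (Real.exp_pos _)] at this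
    linarith
  have hTup : T * M ≤ A * Real.exp ((1 + τ₁) * s) := by
    have := (mul_le_mul_of_nonneg_left hy hT).trans hTy
    rw [neg_mul, Real.exp_neg, ← div_eq_mul_inv, div_le_iff₀ (Real.exp_pos _), mul_div_assoc',
      div_mul_eq_mul_div, le_div_iff₀ hM] at this
    rw [one_add_mul, Real.exp_add]
    linarith
  calc Real.exp ((k + 1) * τ₂ * s) = Real.exp (τ₂ * s) ^ (k + 1) := by
        rw [← Real.exp_nat_mul, mul_assoc]
        push_cast
        rfl
    _ ≤ (2 * T) ^ (k + 1) := by gcongr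
    _ = 2 ^ (k + 1) * T ^ k * T := by ring
    _ ≤ 2 ^ (k + 1) * T ^ k * (c * M ^ k) := by gcongr
    _ = 2 ^ (k + 1) * c * (T * M) ^ k := by ring
    _ ≤ 2 ^ (k + 1) * c * (A * Real.exp ((1 + τ₁) * s)) ^ k := by
        have hc : 0 ≤ c := nonneg_of_mul_nonneg_left (hT.trans hTM) (by positivity)
        gcongr
    _ = 2 ^ (k + 1) * c * A ^ k * Real.exp (k * (1 + τ₁) * s) := by
        rw [mul_pow, ← Real.exp_nat_mul]
        ring_nf

end Growth

section LinearForms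

variable {ι : Type*} [Fintype ι] {η : ι → ℝ} {ℓ : ℕ → ι → ℤ} {σ : ℕ → ℝ} {τ₁ τ₂ : ℝ}

theorem finrank_span_pos_of_sum_ne_zero {l : ι → ℤ} (h : ∑ i, l i * η i ≠ 0) :
    0 < Module.finrank ℚ (Submodule.span ℚ (Set.range η)) := by
  have : Module.Finite ℚ (Submodule.span ℚ (Set.range η)) := .span_of_finite ℚ (Set.finite_range η)
  refine Nat.pos_of_ne_zero fun hzero ↦ h <| Finset.sum_eq_zero fun i _ ↦ ?_
  rw [Submodule.finrank_eq_zero, Submodule.span_eq_bot] at hzero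
  rw [hzero _ ⟨i, rfl⟩, mul_zero]

theorem tendsto_zero_of_abs_le_exp (hσ : Tendsto σ atTop atTop) (hτ₂ : 0 < τ₂) {u : ℕ → ℝ}
    (hu : ∀ᶠ n in atTop, |u n| ≤ Real.exp (-τ₂ * σ (n + 1))) : Tendsto u atTop (nhds 0) := by
  refine squeeze_zero_norm' hu (Real.tendsto_exp_atBot.comp ?_)
  exact ((tendsto_add_atTop_iff_nat 1).2 hσ).const_mul_atTop_of_neg (neg_neg_of_pos hτ₂)

theorem exists_half_le_abs_mul_and_succ_lt {c A : ℝ} (hc : 0 < c) (hA : 0 ≤ A) {N : ℕ}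
    (hN : ∑ i, ℓ N i * η i ≠ 0) (hlim : Tendsto (fun n ↦ ∑ i, ℓ n i * η i) atTop (nhds 0)) :
    ∃ M : ℕ, 0 < M ∧ ∀ (t : ℝ) (Y : ι → ℤ), c ≤ |t| → (∀ i, |t * η i - Y i| ≤ A / M) →
      ∃ n ≥ N, 1 / 2 ≤ |t * ∑ i, ℓ n i * η i| ∧ |t * ∑ i, ℓ (n + 1) i * η i| < 1 / 2 := by
  set S : ℝ := ((∑ i, |ℓ N i| : ℤ) : ℝ)
  have : 0 ≤ S := by positivity
  obtain ⟨M, hM⟩ := exists_nat_gt (S * A / (c * |∑ i, ℓ N i * η i|))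
  have hM₀ : (0 : ℝ) < M := lt_of_le_of_lt (by positivity) hM
  refine ⟨M, by exact_mod_cast hM₀, fun t Y hct hY ↦ exists_ge_le_and_succ_lt ?_ ?_⟩
  · by_contra! hlt
    have hle : c * |∑ i, ℓ N i * η i| ≤ S * (A / M) :=
      calc c * |∑ i, ℓ N i * η i| ≤ |t| * |∑ i, ℓ N i * η i| := by gcongr
        _ = |t * ∑ i, ℓ N i * η i| := (abs_mul _ _).symm
        _ ≤ S * (A / M) := abs_mul_sum_le_of_lt_half (by positivity) hY le_rfl hlt
    rw [div_lt_comm₀ (by positivity) hM₀, mul_div_assoc] at hM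
    exact hM.not_ge hle
  · have hlim_abs : Tendsto (fun n ↦ |t * ∑ i, ℓ n i * η i|) atTop (nhds 0) := by
      simpa only [mul_zero, abs_zero] using (hlim.const_mul t).abs
    exact ((eventually_ge_atTop N).and (hlim_abs.eventually_lt_const one_half_pos)).exists

theorem one_add_le_finrank_mul_of_exp_bounds (hτ₂ : 0 < τ₂) (hσ : Tendsto σ atTop atTop)
    (h : ∀ᶠ n in atTop, (∑ i, |ℓ n i| : ℤ) ≤ Real.exp (σ n) ∧
      Real.exp (-τ₁ * σ n) ≤ |∑ i, ℓ n i * η i| ∧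
      |∑ i, ℓ n i * η i| ≤ Real.exp (-τ₂ * σ (n + 1))) :
    1 + τ₁ ≤ Module.finrank ℚ (Submodule.span ℚ (Set.range η)) * (1 + τ₁ - τ₂) := by
  obtain ⟨N, hN⟩ := eventually_atTop.1 h
  have hne (n) (hn : n ≥ N) : ∑ i, ℓ n i * η i ≠ 0 :=
    abs_pos.1 ((Real.exp_pos _).trans_le (hN n hn).2.1)
  have hlim := tendsto_zero_of_abs_le_exp hσ hτ₂ (h.mono fun n hn ↦ hn.2.2)
  obtain ⟨k, hk⟩ := Nat.exists_eq_add_one.2 (finrank_span_pos_of_sum_ne_zero (hne N le_rfl))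
  obtain ⟨c, hc, A, hA, happrox⟩ := exists_simultaneous_approx_of_finrank_span hk
  have hfreq : ∃ᶠ n in atTop, Real.exp ((k + 1) * τ₂ * σ n) ≤
      2 ^ (k + 1) * c * A ^ k * Real.exp (k * (1 + τ₁) * σ n) := by
    refine frequently_atTop.2 fun N' ↦ ?_
    obtain ⟨M, hM, hcross⟩ := exists_half_le_abs_mul_and_succ_lt hc hA
      (hne (max N N') (le_max_left _ _)) hlim
    obtain ⟨t, Y, hct, htM, hY⟩ := happrox M hM
    obtain ⟨n, hn, hge, hlt⟩ := hcross t Y hct hY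
    obtain ⟨hNn, hN'n⟩ := max_le_iff.1 hn
    obtain ⟨hsize, hlower, -⟩ := hN (n + 1) (by lia)
    have hsmall := abs_mul_sum_le_of_lt_half (by positivity) hY hsize hlt
    rw [abs_mul] at hge hsmall
    exact ⟨n + 1, by lia, exp_mul_le_of_mul_bounds (by positivity) (abs_nonneg t) htM
      (hN n hNn).2.2 hge hlower hsmall⟩
  have hle : (k + 1) * τ₂ ≤ k * (1 + τ₁) := le_of_frequently_exp_mul_le hσ hfreq
  rw [hk]
  push_cast
  linarith

end LinearForms

theorem nesterenko_refined_general {ι : Type*} [Fintype ι] (η : ι → ℝ) {τ₁ τ₂ : ℝ} (hτ₂ : 0 < τ₂)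
    {σ : ℕ → ℝ} (hσ : Tendsto σ atTop atTop) {ℓ : ℕ → ι → ℤ} {ε₁ ε₂ : ℕ → ℝ}
    (hε₁ : Tendsto ε₁ atTop (nhds 0)) (hε₂ : Tendsto ε₂ atTop (nhds 0))
    (h : ∀ᶠ n in atTop, ((∑ i, |ℓ n i| : ℤ) : ℝ) ≤ Real.exp (σ n) ∧
      Real.exp (-(τ₁ + ε₁ n) * σ n) ≤ |∑ i, (ℓ n i : ℝ) * η i| ∧
      |∑ i, (ℓ n i : ℝ) * η i| ≤ Real.exp (-(τ₂ + ε₂ n) * σ (n + 1))) :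
    (1 + τ₁) / (1 + τ₁ - τ₂) ≤ (Module.finrank ℚ (Submodule.span ℚ (Set.range η)) : ℝ) := by
  have one_le_finrank : (1 : ℝ) ≤ Module.finrank ℚ (Submodule.span ℚ (Set.range η)) := by
    obtain ⟨n, -, hlower, -⟩ := h.exists
    exact_mod_cast finrank_span_pos_of_sum_ne_zero
      (abs_pos.1 ((Real.exp_pos _).trans_le hlower))
  set d : ℝ := (Module.finrank ℚ (Submodule.span ℚ (Set.range η)) : ℝ)
  have perturbed : ∀ δ ∈ Set.Ioo 0 τ₂, 1 + (τ₁ + δ) ≤ d * (1 + (τ₁ + δ) - (τ₂ - δ)) := by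
    rintro δ ⟨hδ, hδτ₂⟩
    refine one_add_le_finrank_mul_of_exp_bounds (ℓ := ℓ) (sub_pos.2 hδτ₂) hσ ?_
    filter_upwards [h, hε₁.eventually_lt_const hδ, hε₂.eventually_const_lt (neg_lt_zero.2 hδ),
      hσ.eventually_ge_atTop 0, ((tendsto_add_atTop_iff_nat 1).2 hσ).eventually_ge_atTop 0]
      with n ⟨hsize, hlower, hupper⟩ hε₁δ hε₂δ hσn hσn'
    refine ⟨hsize, le_trans ?_ hlower, hupper.trans ?_⟩ <;> gcongr
    linarith
  have limit : 1 + τ₁ ≤ d * (1 + τ₁ - τ₂) := by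
    have hclosed : IsClosed {δ : ℝ | 1 + (τ₁ + δ) ≤ d * (1 + (τ₁ + δ) - (τ₂ - δ))} :=
      isClosed_le (by fun_prop) (by fun_prop)
    have hzero : (0 : ℝ) ∈ closure (Set.Ioo 0 τ₂) := by
      rw [closure_Ioo hτ₂.ne]
      exact Set.left_mem_Icc.2 hτ₂.le
    simpa using hclosed.closure_subset_iff.2 perturbed hzero
  have denominator_pos : 0 < 1 + τ₁ - τ₂ := by
    by_contra! hnonpos
    linarith [mul_le_mul_of_nonpos_right one_le_finrank hnonpos]
  exact (div_le_iff₀ denominator_pos).2 limit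

theorem nesterenko_refined (m : ℕ) (θ : Fin m → ℝ) (τ₁ τ₂ : ℝ) (hτ₁ : 0 < τ₁) (hτ₂ : 0 < τ₂)
    (σ : ℕ → ℝ) (hσpos : ∀ n, 0 < σ n) (hσmono : Monotone σ)
    (hσinf : Tendsto σ atTop atTop)
    (ℓ : ℕ → Fin (m + 1) → ℤ) (ε₁ ε₂ : ℕ → ℝ)
    (hε₁ : Tendsto ε₁ atTop (nhds 0)) (hε₂ : Tendsto ε₂ atTop (nhds 0))
    (hmain : ∃ N, ∀ n ≥ N,
      ((∑ i, |ℓ n i| : ℤ) : ℝ) ≤ Real.exp (σ n) ∧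
      Real.exp (-(τ₁ + ε₁ n) * σ n) ≤
        |∑ i, (ℓ n i : ℝ) * (Fin.cons 1 θ : Fin (m + 1) → ℝ) i| ∧
      |∑ i, (ℓ n i : ℝ) * (Fin.cons 1 θ : Fin (m + 1) → ℝ) i| ≤
        Real.exp (-(τ₂ + ε₂ n) * σ (n + 1))) :
    (1 + τ₁) / (1 + τ₁ - τ₂) ≤
      (Module.finrank ℚ (Submodule.span ℚ (insert (1 : ℝ) (Set.range θ))) : ℝ) := by
  rw [← Fin.range_cons]
  exact nesterenko_refined_general _ hτ₂ hσinf hε₁ hε₂ (eventually_atTop.2 hmain)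
end

section
/- Under the hypotheses of the refined Nesterenko criterion (integer linear forms L_n in 1, θ₁,…,θ_m with coefficient sum ≤ e^{σ(n)} and e^{−(τ₁+o(1))σ(n)} ≤ |L_n(1,θ)| ≤ e^{−(τ₂+o(1))σ(n+1)}), if ℓ is an integer with τ₁ > (ℓ−1) + (τ₁−τ₂)ℓ, then dim_ℚ(ℚ + ℚθ₁ + ⋯ + ℚθ_m) ≥ ℓ + 1. In particular, if τ₁ > (m−1) + m(τ₁−τ₂), then 1, θ₁, …, θ_m are linearly independent over ℚ. -/
open Filter

/-!
Passing to a `ℚ`-basis of the span of the numbers and dividing by its first element reduces to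
`k + 1` numbers `1, ζ₁, …, ζₖ`, where the claim is `(k + 1) * τ₂ ≤ k * (1 + τ₁)`. Dirichlet's
theorem gives `0 < q ≤ Q ^ k` and an integer point `p` within `1 / Q` of `q • (1, ζ)`. For the first
`n` at which the upper bound on `|Lₙ|` forces `q * |Lₙ(1, ζ)| < 1 / 2`, the integer `Lₙ p` differs
from `q * Lₙ(1, ζ)` by at most `exp ((1 + o(1)) * σ n) / Q`. If that error were smaller than
`q * |Lₙ(1, ζ)|`, then `Lₙ p` would be a nonzero integer of absolute value less than `1`. So
`Q * q ≤ exp ((1 + τ₁ + o(1)) * σ n)`, which for large `Q` keeps `n` away from the initial index,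
and minimality of `n` then gives `Q ^ k ≥ q ≥ exp ((τ₂ - o(1)) * σ n)`. Comparing exponents yields
the claim.
-/

theorem exists_nat_abs_mul_sub_int_le {ι : Type*} [Fintype ι] (θ : ι → ℝ) {Q : ℕ} (hQ : 0 < Q) :
    ∃ q : ℕ, 0 < q ∧ q ≤ Q ^ Fintype.card ι ∧
      ∃ p : ι → ℤ, ∀ i, |q * θ i - p i| ≤ 1 / Q := by
  classical
  have hQ' : (0 : ℝ) < Q := mod_cast hQ
  let cell (j : ℕ) (i : ι) : ℤ := ⌊Q * Int.fract (j * θ i)⌋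
  have cell_mem : ∀ j ∈ Finset.range (Q ^ Fintype.card ι + 1),
      cell j ∈ Fintype.piFinset fun _ => Finset.Ico (0 : ℤ) Q := fun j _ => by
    refine Fintype.mem_piFinset.2 fun i => Finset.mem_Ico.2 ⟨?_, ?_⟩
    · exact Int.floor_nonneg.2 (mul_nonneg hQ'.le (Int.fract_nonneg _))
    · exact Int.floor_lt.2 (mod_cast mul_lt_of_lt_one_right hQ' (Int.fract_lt_one _))
  obtain ⟨x, hx, y, hy, hne, hcell⟩ :=
    Finset.exists_ne_map_eq_of_card_lt_of_maps_to (by simp) cell_mem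
  wlog hxy : x < y generalizing x y
  · exact this y hy x hx hne.symm hcell.symm (by lia)
  rw [Finset.mem_range] at hy
  refine ⟨y - x, by lia, by lia, fun i => ⌊y * θ i⌋ - ⌊x * θ i⌋, fun i => ?_⟩
  have hfract : ((y - x : ℕ) : ℝ) * θ i - ((⌊y * θ i⌋ - ⌊x * θ i⌋ : ℤ) : ℝ) =
      Int.fract (y * θ i) - Int.fract (x * θ i) := by
    rw [Nat.cast_sub hxy.le, Int.cast_sub, Int.fract, Int.fract]
    ring
  have hlt := Int.abs_sub_lt_one_of_floor_eq_floor (congrFun hcell i).symm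
  rw [← mul_sub, abs_mul, abs_of_pos hQ'] at hlt
  rw [hfract, le_div_iff₀' hQ']
  exact hlt.le

theorem exists_nat_abs_mul_sub_int_le_of_zero_eq_one {k : ℕ} {ξ : Fin (k + 1) → ℝ} (hξ : ξ 0 = 1)
    {Q : ℕ} (hQ : 0 < Q) :
    ∃ q : ℕ, 0 < q ∧ q ≤ Q ^ k ∧ ∃ p : Fin (k + 1) → ℤ, ∀ i, |q * ξ i - p i| ≤ 1 / Q := by
  obtain ⟨q, hq, hqQ, p, hp⟩ := exists_nat_abs_mul_sub_int_le (Fin.tail ξ) hQ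
  rw [Fintype.card_fin] at hqQ
  refine ⟨q, hq, hqQ, Fin.cons q p, Fin.cases ?_ hp⟩
  simp [hξ]

theorem abs_mul_sum_le_of_abs_mul_sub_int_le {ι : Type*} [Fintype ι] (a p : ι → ℤ) (ξ : ι → ℝ)
    {t δ : ℝ} (hδ : ∀ i, |t * ξ i - p i| ≤ δ) (hsmall : |t * ∑ i, a i * ξ i| < 1 / 2) :
    |t * ∑ i, a i * ξ i| ≤ (∑ i, |(a i : ℝ)|) * δ := by
  set L := t * ∑ i, a i * ξ i with hL
  set E := ∑ i, a i * (t * ξ i - p i) with hE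
  have hEle : |E| ≤ (∑ i, |(a i : ℝ)|) * δ := by
    rw [Finset.sum_mul]
    refine (Finset.abs_sum_le_sum_abs _ _).trans (Finset.sum_le_sum fun i _ => ?_)
    rw [abs_mul]
    exact mul_le_mul_of_nonneg_left (hδ i) (abs_nonneg _)
  have hint : ((∑ i, a i * p i : ℤ) : ℝ) = L - E := by
    rw [hL, hE, Finset.mul_sum, ← Finset.sum_sub_distrib]
    push_cast
    exact Finset.sum_congr rfl fun i _ => by ring
  by_contra! hlt
  have habs : |((∑ i, a i * p i : ℤ) : ℝ)| < 1 := by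
    rw [hint]
    linarith [abs_sub L E]
  have hzero : ∑ i, a i * p i = 0 := Int.abs_lt_one_iff.1 (mod_cast habs)
  rw [hzero, Int.cast_zero] at hint
  rw [← sub_eq_zero.1 hint.symm] at hEle
  exact hlt.not_ge hEle

theorem exists_ge_and_succ_and_eq_or_not {P : ℕ → Prop} (hP : ∀ᶠ n in atTop, P n) (N : ℕ) :
    ∃ n ≥ N, P (n + 1) ∧ (n = N ∨ ¬ P n) := by
  classical
  have hex : ∃ d, P (N + d + 1) := by
    obtain ⟨n, hn, hNn⟩ := (hP.and (eventually_gt_atTop N)).exists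
    exact ⟨n - N - 1, by rwa [show N + (n - N - 1) + 1 = n by lia]⟩
  refine ⟨N + Nat.find hex, by lia, Nat.find_spec hex, ?_⟩
  rcases h : Nat.find hex with _ | d
  · exact .inl rfl
  · exact .inr (Nat.find_min hex (by lia : d < Nat.find hex))

theorem exp_lt_mul_of_le_pow {k : ℕ} {x y q Q : ℝ} (hxy : k * x < (k + 1) * y) (hQ : 0 ≤ Q)
    (hyq : Real.exp y ≤ q) (hqQ : q ≤ Q ^ k) : Real.exp x < Q * q := by
  have hq : 0 ≤ q := (Real.exp_pos y).le.trans hyq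
  refine lt_of_pow_lt_pow_left₀ k (by positivity) ?_
  calc Real.exp x ^ k = Real.exp (k * x) := (Real.exp_nat_mul x k).symm
    _ < Real.exp ((k + 1 : ℕ) * y) := Real.exp_lt_exp.2 (by exact_mod_cast hxy)
    _ = Real.exp y ^ (k + 1) := Real.exp_nat_mul y (k + 1)
    _ ≤ q ^ (k + 1) := by gcongr
    _ = q * q ^ k := pow_succ' q k
    _ ≤ Q ^ k * q ^ k := by gcongr
    _ = (Q * q) ^ k := (mul_pow Q q k).symm

theorem sum_abs_sum_mul_le {R ι κ : Type*} [CommRing R] [LinearOrder R] [IsStrictOrderedRing R]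
    [Fintype ι] [Fintype κ] (a : ι → R) (z : ι → κ → R) :
    ∑ i, |∑ j, a j * z j i| ≤ (∑ j, ∑ i, |z j i|) * ∑ j, |a j| := by
  calc ∑ i, |∑ j, a j * z j i| ≤ ∑ i, ∑ j, |a j| * |z j i| := by
        simp only [← abs_mul]
        exact Finset.sum_le_sum fun i _ => Finset.abs_sum_le_sum_abs _ _
    _ = ∑ j, |a j| * ∑ i, |z j i| := by
        rw [Finset.sum_comm]
        simp only [Finset.mul_sum]
    _ ≤ ∑ j, |a j| * ∑ j, ∑ i, |z j i| := Finset.sum_le_sum fun j hj =>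
        mul_le_mul_of_nonneg_left
          (Finset.single_le_sum (f := fun j => ∑ i, |z j i|) (fun _ _ => by positivity) hj)
          (abs_nonneg _)
    _ = (∑ j, ∑ i, |z j i|) * ∑ j, |a j| := by rw [← Finset.sum_mul, mul_comm]

theorem eventually_mul_exp_le {α : Type*} {f : Filter α} {σ : α → ℝ} (hσ : Tendsto σ f atTop)
    (C : ℝ) {x y : ℝ} (hxy : x < y) :
    ∀ᶠ n in f, C * Real.exp (x * σ n) ≤ Real.exp (y * σ n) := by
  have hexp : Tendsto (fun n => Real.exp ((y - x) * σ n)) f atTop :=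
    Real.tendsto_exp_atTop.comp (hσ.const_mul_atTop (sub_pos.2 hxy))
  filter_upwards [hexp.eventually_ge_atTop C] with n hn
  calc C * Real.exp (x * σ n) ≤ Real.exp ((y - x) * σ n) * Real.exp (x * σ n) := by gcongr
    _ = Real.exp (y * σ n) := by rw [← Real.exp_add]; ring_nf

theorem exists_smul_eq_sum_smul (R : Type*) {F V ι κ : Type*} [CommRing R] [IsDomain R] [Field F]
    [Algebra R F] [IsFractionRing R F] [AddCommGroup V] [Module R V] [Module F V]
    [IsScalarTower R F V] [Finite ι] [Fintype κ] (b : Module.Basis κ F V) (v : ι → V) :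
    ∃ d : R, d ≠ 0 ∧ ∃ z : ι → κ → R, ∀ j, d • v j = ∑ i, z j i • b i := by
  obtain ⟨d, hd⟩ := IsLocalization.exist_integer_multiples_of_finite (nonZeroDivisors R)
    fun x : ι × κ => b.repr (v x.1) x.2
  choose z hz using hd
  refine ⟨d, nonZeroDivisors.coe_ne_zero d, fun j i => z (j, i), fun j => ?_⟩
  calc (d : R) • v j = ∑ i, (d : R) • b.repr (v j) i • b i := by
        rw [← Finset.smul_sum, b.sum_repr]
    _ = ∑ i, z (j, i) • b i := Finset.sum_congr rfl fun i _ => by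
        rw [← smul_assoc, ← hz (j, i), algebraMap_smul]

theorem exists_normalized_int_expansion {K ι : Type*} [Field K] [CharZero K] [Finite ι]
    {ξ : ι → K} (hξ : ξ ≠ 0) :
    ∃ k, Module.finrank ℚ (Submodule.span ℚ (Set.range ξ)) = k + 1 ∧
      ∃ ζ : Fin (k + 1) → K, ζ 0 = 1 ∧ ∃ c : K, c ≠ 0 ∧
        ∃ z : ι → Fin (k + 1) → ℤ, ∀ j, c * ξ j = ∑ i, z j i * ζ i := by
  have : FiniteDimensional ℚ (Submodule.span ℚ (Set.range ξ)) :=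
    FiniteDimensional.span_of_finite ℚ (Set.finite_range ξ)
  have hmem (j : ι) : ξ j ∈ Submodule.span ℚ (Set.range ξ) := Submodule.subset_span ⟨j, rfl⟩
  obtain ⟨j, hj⟩ := Function.ne_iff.1 hξ
  have hpos : Module.finrank ℚ (Submodule.span ℚ (Set.range ξ)) ≠ 0 := fun h =>
    hj (by simpa [Submodule.finrank_eq_zero.1 h] using hmem j)
  obtain ⟨k, hk⟩ := Nat.exists_eq_succ_of_ne_zero hpos
  let b := Module.finBasisOfFinrankEq ℚ _ hk
  have hb : (b 0 : K) ≠ 0 := by simpa using b.ne_zero 0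
  obtain ⟨d, hd, z, hz⟩ := exists_smul_eq_sum_smul ℤ b fun j => ⟨ξ j, hmem j⟩
  refine ⟨k, hk, fun i => b i / b 0, div_self hb, d / b 0,
    div_ne_zero (Int.cast_ne_zero.2 hd) hb, z, fun j => ?_⟩
  have hzj := congrArg (Submodule.subtype _) (hz j)
  simp only [map_zsmul, map_sum, Submodule.subtype_apply, zsmul_eq_mul] at hzj
  simp only [div_mul_eq_mul_div, hzj, Finset.sum_div, mul_div_assoc]

theorem exists_pos_margin {k τ₁ τ₂ : ℝ} (hτ₂ : 0 < τ₂) (h : k * (1 + τ₁) < (k + 1) * τ₂) :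
    ∃ η > 0, η < τ₂ ∧ k * (1 + τ₁ + 2 * η) < (k + 1) * (τ₂ - 2 * η) := by
  have hmargin : ∀ᶠ η in nhds (0 : ℝ), k * (1 + τ₁ + 2 * η) < (k + 1) * (τ₂ - 2 * η) :=
    ContinuousAt.eventually_lt (by fun_prop) (by fun_prop) (by simpa using h)
  exact ((eventually_lt_nhds hτ₂).and hmargin).exists_gt

theorem exists_nat_mul_abs_sum_le {k : ℕ} {ξ : Fin (k + 1) → ℝ} (hξ : ξ 0 = 1)
    {a : ℕ → Fin (k + 1) → ℤ} {σ : ℕ → ℝ} (hσ : Tendsto σ atTop atTop) {τ : ℝ} (hτ : 0 < τ) {N : ℕ}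
    (hup : ∀ n ≥ N, |∑ i, a n i * ξ i| ≤ Real.exp (-τ * σ (n + 1))) {Q : ℕ} (hQ : 0 < Q) :
    ∃ q : ℕ, 0 < q ∧ q ≤ Q ^ k ∧ ∃ n ≥ N,
      Q * (q * |∑ i, a n i * ξ i|) ≤ ∑ i, |(a n i : ℝ)| ∧
        (n = N ∨ Real.exp (τ * σ n) ≤ 2 * q) := by
  obtain ⟨q, hq, hqQ, p, hp⟩ := exists_nat_abs_mul_sub_int_le_of_zero_eq_one hξ hQ
  have hev : ∀ᶠ n in atTop, 2 * q < Real.exp (τ * σ n) :=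
    (Real.tendsto_exp_atTop.comp (hσ.const_mul_atTop hτ)).eventually_gt_atTop _
  -- Minimality of `n` bounds `q` below in terms of `σ n`, while the condition itself concerns
  -- `σ (n + 1)`; hence the shape of the upper bound on the forms.
  obtain ⟨n, hn, hsucc, hmin⟩ := exists_ge_and_succ_and_eq_or_not hev N
  refine ⟨q, hq, hqQ, n, hn, ?_, hmin.imp_right not_lt.1⟩
  have hsmall : |q * ∑ i, a n i * ξ i| < 1 / 2 := by
    calc |q * ∑ i, a n i * ξ i| = q * |∑ i, a n i * ξ i| := by rw [abs_mul, Nat.abs_cast]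
      _ ≤ q / Real.exp (τ * σ (n + 1)) := by
        rw [div_eq_mul_inv, ← Real.exp_neg, ← neg_mul]
        gcongr
        exact hup n hn
      _ < 1 / 2 := (div_lt_iff₀ (Real.exp_pos _)).2 (by linarith)
  have hle := abs_mul_sum_le_of_abs_mul_sub_int_le (a n) p ξ hp hsmall
  rwa [abs_mul, Nat.abs_cast, mul_one_div, le_div_iff₀' (by positivity)] at hle

/-- The integer vectors `a n` are the coefficients of linear forms satisfying the hypotheses of the
refined Nesterenko criterion at the point `ξ`, with exponents `τ₁`, `τ₂` relative to the scale `σ`.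
Each `o(1)` is encoded as a bound eventually valid for every `η > 0`, and the coefficients need only
be at most `exp ((1 + o(1)) * σ n)`, so that constant factors are harmless. -/
structure IsNesterenkoSequence {ι : Type*} [Fintype ι] (σ : ℕ → ℝ) (τ₁ τ₂ : ℝ) (ξ : ι → ℝ)
    (a : ℕ → ι → ℤ) : Prop where
  sum_abs_le : ∀ η > 0, ∀ᶠ n in atTop, ∑ i, |(a n i : ℝ)| ≤ Real.exp ((1 + η) * σ n)
  exp_le_abs : ∀ η > 0, ∀ᶠ n in atTop, Real.exp (-(τ₁ + η) * σ n) ≤ |∑ i, a n i * ξ i|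
  abs_le_exp : ∀ η > 0, ∀ᶠ n in atTop, |∑ i, a n i * ξ i| ≤ Real.exp (-(τ₂ - η) * σ (n + 1))

namespace IsNesterenkoSequence

variable {ι κ : Type*} [Fintype ι] [Fintype κ] {σ : ℕ → ℝ} {τ₁ τ₂ : ℝ} {ξ : ι → ℝ}
  {a : ℕ → ι → ℤ}

theorem of_eventually (hσ : Tendsto σ atTop atTop) {ε₁ ε₂ : ℕ → ℝ}
    (hε₁ : Tendsto ε₁ atTop (nhds 0)) (hε₂ : Tendsto ε₂ atTop (nhds 0))
    (h : ∀ᶠ n in atTop, ((∑ i, |a n i| : ℤ) : ℝ) ≤ Real.exp (σ n) ∧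
      Real.exp (-(τ₁ + ε₁ n) * σ n) ≤ |∑ i, a n i * ξ i| ∧
      |∑ i, a n i * ξ i| ≤ Real.exp (-(τ₂ + ε₂ n) * σ (n + 1))) :
    IsNesterenkoSequence σ τ₁ τ₂ ξ a where
  sum_abs_le η hη := by
    filter_upwards [h, hσ.eventually_ge_atTop 0] with n ⟨hsum, _, _⟩ hσn
    push_cast at hsum
    refine hsum.trans (Real.exp_le_exp.2 ?_)
    exact le_mul_of_one_le_left hσn (by linarith)
  exp_le_abs η hη := by
    filter_upwards [h, hσ.eventually_ge_atTop 0, hε₁.eventually_le_const hη]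
      with n ⟨_, hlow, _⟩ hσn hεn
    refine (Real.exp_le_exp.2 ?_).trans hlow
    gcongr
  abs_le_exp η hη := by
    filter_upwards [h, (tendsto_add_atTop_iff_nat 1).2 hσ |>.eventually_ge_atTop 0,
      hε₂.eventually_const_le (neg_lt_zero.2 hη)] with n ⟨_, _, hup⟩ hσn hεn
    refine hup.trans (Real.exp_le_exp.2 ?_)
    exact mul_le_mul_of_nonneg_right (by linarith) hσn

theorem ne_zero (h : IsNesterenkoSequence σ τ₁ τ₂ ξ a) : ξ ≠ 0 := by
  rintro rfl
  obtain ⟨n, hn⟩ := (h.exp_le_abs 1 one_pos).exists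
  exact (Real.exp_pos _).not_ge (by simpa using hn)

theorem of_int_expansion (h : IsNesterenkoSequence σ τ₁ τ₂ ξ a) (hσ : Tendsto σ atTop atTop)
    {c : ℝ} (hc : c ≠ 0) {ζ : κ → ℝ} {z : ι → κ → ℤ} (hz : ∀ j, c * ξ j = ∑ i, z j i * ζ i) :
    IsNesterenkoSequence σ τ₁ τ₂ ζ fun n i => ∑ j, a n j * z j i := by
  have hform (n : ℕ) : ∑ i, ((∑ j, a n j * z j i : ℤ) : ℝ) * ζ i = c * ∑ j, a n j * ξ j := by
    simp only [Finset.mul_sum, mul_left_comm c, hz, Int.cast_sum, Int.cast_mul, Finset.sum_mul]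
    rw [Finset.sum_comm]
    simp only [mul_assoc]
  refine ⟨fun η hη => ?_, fun η hη => ?_, fun η hη => ?_⟩
  · filter_upwards [h.sum_abs_le (η / 2) (half_pos hη), eventually_mul_exp_le hσ
      (∑ j, ∑ i, |(z j i : ℝ)|) (by linarith : 1 + η / 2 < 1 + η)] with n hn hexp
    push_cast
    refine (sum_abs_sum_mul_le _ fun j i => (z j i : ℝ)).trans (le_trans ?_ hexp)
    gcongr
  · filter_upwards [h.exp_le_abs (η / 2) (half_pos hη), eventually_mul_exp_le hσ
      |c|⁻¹ (by linarith : -(τ₁ + η) < -(τ₁ + η / 2))] with n hn hexp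
    rw [hform, abs_mul]
    exact (inv_mul_le_iff₀ (abs_pos.2 hc)).1 (hexp.trans hn)
  · filter_upwards [h.abs_le_exp (η / 2) (half_pos hη), eventually_mul_exp_le
      ((tendsto_add_atTop_iff_nat 1).2 hσ) |c| (by linarith : -(τ₂ - η / 2) < -(τ₂ - η))]
      with n hn hexp
    rw [hform, abs_mul]
    exact (mul_le_mul_of_nonneg_left hn (abs_nonneg c)).trans hexp

theorem add_one_mul_le_mul_one_add {k : ℕ} {ξ : Fin (k + 1) → ℝ} {a : ℕ → Fin (k + 1) → ℤ}
    (h : IsNesterenkoSequence σ τ₁ τ₂ ξ a) (hσ : Tendsto σ atTop atTop) (hτ₂ : 0 < τ₂)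
    (hξ : ξ 0 = 1) : (k + 1) * τ₂ ≤ k * (1 + τ₁) := by
  by_contra! hlt
  obtain ⟨η, hη, hητ₂, hηlt⟩ := exists_pos_margin hτ₂ hlt
  obtain ⟨N, hN⟩ := eventually_atTop.1 <| (h.sum_abs_le η hη).and <| (h.exp_le_abs η hη).and <|
    (h.abs_le_exp η hη).and <| (hσ.eventually_gt_atTop 0).and <|
    eventually_mul_exp_le hσ 2 (by linarith : τ₂ - 2 * η < τ₂ - η)
  have hLN : 0 < |∑ i, a N i * ξ i| := (Real.exp_pos _).trans_le (hN N le_rfl).2.1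
  obtain ⟨Q, hQ⟩ := exists_nat_gt ((∑ i, |(a N i : ℝ)|) / |∑ i, a N i * ξ i|)
  have hQpos : (0 : ℝ) < Q := lt_of_le_of_lt (by positivity) hQ
  obtain ⟨q, hq, hqQ, n, hNn, hform, rfl | hqn⟩ :=
    exists_nat_mul_abs_sum_le hξ hσ (sub_pos.2 hητ₂) (fun n hn => (hN n hn).2.2.1)
      (mod_cast hQpos : 0 < Q)
  · have hq : (1 : ℝ) ≤ q := mod_cast hq
    have hle : |∑ i, a n i * ξ i| ≤ q * |∑ i, a n i * ξ i| := le_mul_of_one_le_left hLN.le hq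
    rw [div_lt_iff₀ hLN] at hQ
    exact (hQ.trans_le (mul_le_mul_of_nonneg_left hle hQpos.le)).not_ge hform
  · obtain ⟨hsum, hlow, -, hσn, hexp⟩ := hN n hNn
    have hqexp : Real.exp ((τ₂ - 2 * η) * σ n) ≤ q := by linarith
    have hlarge : Real.exp ((1 + τ₁ + 2 * η) * σ n) < Q * q := by
      refine exp_lt_mul_of_le_pow ?_ hQpos.le hqexp (mod_cast hqQ)
      simpa only [mul_assoc] using mul_lt_mul_of_pos_right hηlt hσn
    have hlt : ∑ i, |(a n i : ℝ)| < Q * (q * |∑ i, a n i * ξ i|) := by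
      calc ∑ i, |(a n i : ℝ)| ≤ Real.exp ((1 + η) * σ n) := hsum
        _ = Real.exp ((1 + τ₁ + 2 * η) * σ n) * Real.exp (-(τ₁ + η) * σ n) := by
          rw [← Real.exp_add]
          ring_nf
        _ < Q * q * Real.exp (-(τ₁ + η) * σ n) := by gcongr
        _ ≤ Q * q * |∑ i, a n i * ξ i| := by gcongr
        _ = Q * (q * |∑ i, a n i * ξ i|) := mul_assoc _ _ _
    exact hlt.not_ge hform

theorem one_add_le_finrank_mul (h : IsNesterenkoSequence σ τ₁ τ₂ ξ a)
    (hσ : Tendsto σ atTop atTop) (hτ₂ : 0 < τ₂) :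
    1 + τ₁ ≤ Module.finrank ℚ (Submodule.span ℚ (Set.range ξ)) * (1 + τ₁ - τ₂) := by
  obtain ⟨k, hk, ζ, hζ, c, hc, z, hz⟩ := exists_normalized_int_expansion h.ne_zero
  have hle := (h.of_int_expansion hσ hc hz).add_one_mul_le_mul_one_add hσ hτ₂ hζ
  rw [hk]
  push_cast
  linarith

theorem add_one_le_finrank (h : IsNesterenkoSequence σ τ₁ τ₂ ξ a)
    (hσ : Tendsto σ atTop atTop) (hτ₂ : 0 < τ₂) {l : ℤ} (hl : l - 1 + (τ₁ - τ₂) * l < τ₁) :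
    l + 1 ≤ (Module.finrank ℚ (Submodule.span ℚ (Set.range ξ)) : ℤ) := by
  have hle := h.one_add_le_finrank_mul hσ hτ₂
  obtain ⟨k, hk, -⟩ := exists_normalized_int_expansion h.ne_zero
  rw [hk] at hle ⊢
  push_cast at hle
  have hpos : 0 < 1 + τ₁ - τ₂ := by
    by_contra! hneg
    linarith [mul_nonpos_of_nonneg_of_nonpos (Nat.cast_nonneg (α := ℝ) k) hneg]
  have hlt : (l : ℝ) < (k + 1 : ℕ) := by
    refine lt_of_mul_lt_mul_right ?_ hpos.le
    push_cast
    linarith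
  exact_mod_cast hlt

end IsNesterenkoSequence

theorem nesterenko_refined_consequences_general {ι : Type*} [Fintype ι] {σ : ℕ → ℝ} {τ₁ τ₂ : ℝ}
    {ξ : ι → ℝ} {a : ℕ → ι → ℤ} (h : IsNesterenkoSequence σ τ₁ τ₂ ξ a)
    (hσ : Tendsto σ atTop atTop) (hτ₂ : 0 < τ₂) :
    (∀ l : ℤ, l - 1 + (τ₁ - τ₂) * l < τ₁ →
      l + 1 ≤ (Module.finrank ℚ (Submodule.span ℚ (Set.range ξ)) : ℤ)) ∧
    (Fintype.card ι - 2 + (Fintype.card ι - 1) * (τ₁ - τ₂) < τ₁ → LinearIndependent ℚ ξ) := by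
  refine ⟨fun l hl => h.add_one_le_finrank hσ hτ₂ hl, fun hcard => ?_⟩
  rw [linearIndependent_iff_card_le_finrank_span]
  have hle := h.add_one_le_finrank hσ hτ₂ (l := Fintype.card ι - 1) (by push_cast; linarith)
  simpa [Set.finrank] using hle

theorem nesterenko_refined_consequences (m : ℕ) (θ : Fin m → ℝ)
    (τ₁ τ₂ : ℝ) (hτ₁ : 0 < τ₁) (hτ₂ : 0 < τ₂)
    (σ : ℕ → ℝ) (hσpos : ∀ n, 0 < σ n) (hσmono : Monotone σ)
    (hσinf : Tendsto σ atTop atTop)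
    (ℓ : ℕ → Fin (m + 1) → ℤ) (ε₁ ε₂ : ℕ → ℝ)
    (hε₁ : Tendsto ε₁ atTop (nhds 0)) (hε₂ : Tendsto ε₂ atTop (nhds 0))
    (hmain : ∃ N, ∀ n ≥ N,
      ((∑ i, |ℓ n i| : ℤ) : ℝ) ≤ Real.exp (σ n) ∧
      Real.exp (-(τ₁ + ε₁ n) * σ n) ≤
        |∑ i, (ℓ n i : ℝ) * (Fin.cons 1 θ : Fin (m + 1) → ℝ) i| ∧
      |∑ i, (ℓ n i : ℝ) * (Fin.cons 1 θ : Fin (m + 1) → ℝ) i| ≤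
        Real.exp (-(τ₂ + ε₂ n) * σ (n + 1)))
    (l : ℤ) (hl : τ₁ > ((l : ℝ) - 1) + (τ₁ - τ₂) * (l : ℝ)) :
    ((l : ℝ) + 1 ≤
      (Module.finrank ℚ (Submodule.span ℚ (insert (1 : ℝ) (Set.range θ))) : ℝ)) ∧
    (τ₁ > ((m : ℝ) - 1) + (m : ℝ) * (τ₁ - τ₂) →
      LinearIndependent ℚ (Fin.cons 1 θ : Fin (m + 1) → ℝ)) := by
  have h := nesterenko_refined_consequences_general
    (IsNesterenkoSequence.of_eventually hσinf hε₁ hε₂ (eventually_atTop.2 hmain)) hσinf hτ₂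
  rw [← Fin.range_cons]
  refine ⟨mod_cast h.1 l hl, fun hm => h.2 ?_⟩
  push_cast [Fintype.card_fin]
  linarith
end
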